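/- There exists a connected simple graph G with chromatic number equal to ω such that the complete graph K_ω on countably many vertices is not a minor of G. In particular, Hadwiger's conjecture (that K_{χ(G)} is a minor of G for every graph G) fails for graphs with infinite chromatic number. -/

import Mathlib

/-- Disjoint union of all finite complete graphs, plus an apex vertex `none`. -/
def apexGraph : SimpleGraph (Option (Σ n : ℕ, Fin n)) where
  Adj a b := a ≠ b ∧ (a = none ∨ b = none ∨ a.map Sigma.fst = b.map Sigma.fst)
  symm := ⟨by
    rintro a b ⟨h, h'⟩
    refine ⟨h.symm, ?_⟩
    rcases h' with h' | h' | h'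
    · exact Or.inr (Or.inl h')
    · exact Or.inl h'
    · exact Or.inr (Or.inr h'.symm)⟩
  loopless := ⟨fun a h => h.1 rfl⟩

theorem apexGraph_block (S : Set (Option (Σ n : ℕ, Fin n))) (hS : none ∉ S)
    (u v : S) (w : (apexGraph.induce S).Walk u v) :
    u.1.map Sigma.fst = v.1.map Sigma.fst := by
  induction w with
  | nil => rfl
  | @cons a b c h p ih =>
    have h1 : apexGraph.Adj a.1 b.1 := h
    rcases h1.2 with h' | h' | h'
    · exact absurd (h' ▸ a.2) hS
    · exact absurd (h' ▸ b.2) hS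
    · exact h'.trans ih

/-- There exists a connected simple graph `G` with chromatic number `ω` (no proper coloring
with finitely many colors, but a proper coloring with countably many colors) such that
`K_ω` is not a minor of `G`, i.e., there is no countably infinite family of nonempty,
connected, pairwise disjoint subsets of `V(G)` any two of which are connected to each other.
Hence Hadwiger's conjecture fails for graphs with infinite chromatic number. -/
theorem hadwiger_fails_for_infinite_chromatic_number :
    ∃ (V : Type) (G : SimpleGraph V),
      G.Connected ∧
      (∀ n : ℕ, ¬ G.Colorable n) ∧
      Nonempty (G.Coloring ℕ) ∧
      ¬ ∃ S : ℕ → Set V,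
        (∀ n, (S n).Nonempty) ∧
        (∀ n, (G.induce (S n)).Connected) ∧
        (∀ m n, m ≠ n → Disjoint (S m) (S n)) ∧
        (∀ m n, m ≠ n → ∃ s ∈ S m, ∃ t ∈ S n, G.Adj s t) := by
  refine ⟨_, apexGraph, ?_, ?_, ?_, ?_⟩
  · have h : ∀ v, apexGraph.Reachable none v := by
      intro v
      by_cases hv : none = v
      · subst hv; exact SimpleGraph.Reachable.refl _
      · exact SimpleGraph.Adj.reachable ⟨hv, Or.inl rfl⟩
    exact { preconnected := fun u v => (h u).symm.trans (h v), nonempty := ⟨none⟩ }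
  · rintro n ⟨c⟩
    have hinj : Function.Injective (fun i : Fin (n + 1) => c (some ⟨n + 1, i⟩)) := by
      intro i j hij
      by_contra hne
      refine c.valid (v := some ⟨n + 1, i⟩) (w := some ⟨n + 1, j⟩) ⟨?_, Or.inr (Or.inr rfl)⟩ hij
      intro h
      simp at h
      exact hne h
    have := Fintype.card_le_of_injective _ hinj
    simp at this
  · exact ⟨SimpleGraph.Coloring.mk (fun v => Encodable.encode v) (fun {v w} h h' =>
      h.1 (Encodable.encode_injective h'))⟩
  · rintro ⟨S, hne, hconn, hdisj, hadj⟩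
    obtain ⟨k, hk⟩ : ∃ k, ∀ m, m ≠ k → none ∉ S m := by
      by_cases h : ∃ k, none ∈ S k
      · obtain ⟨k, hk⟩ := h
        exact ⟨k, fun m hm hn => Set.disjoint_left.1 (hdisj m k hm) hn hk⟩
      · exact ⟨0, fun m _ hn => h ⟨m, hn⟩⟩
    have hk1 : none ∉ S (k + 1) := hk _ (by omega)
    obtain ⟨x, hx⟩ := hne (k + 1)
    obtain _ | ⟨n, i⟩ := x
    · exact hk1 hx
    have key : ∀ m : ℕ, ∃ j : Fin n, some ⟨n, j⟩ ∈ S (k + 2 + m) := by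
      intro m
      obtain ⟨s, hs, t, ht, hst⟩ := hadj (k + 1) (k + 2 + m) (by omega)
      obtain ⟨w⟩ := (hconn (k + 1)).preconnected ⟨_, hx⟩ ⟨s, hs⟩
      have hb := apexGraph_block _ hk1 _ _ w
      have hk2 : none ∉ S (k + 2 + m) := hk _ (by omega)
      rcases hst.2 with h | h | h
      · exact absurd (h ▸ hs) hk1
      · exact absurd (h ▸ ht) hk2
      · have hb2 := hb.trans h
        obtain _ | ⟨n', j⟩ := t
        · exact absurd ht hk2
        · simp at hb2
          subst hb2
          exact ⟨j, ht⟩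
    choose f hf using key
    obtain ⟨a, b, hab, h⟩ := Finite.exists_ne_map_eq_of_infinite f
    exact Set.disjoint_left.1 (hdisj (k + 2 + a) (k + 2 + b) (by omega)) (hf a) (h ▸ hf b)
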